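/- Let d ≥ 1, β > 0, and let M(v) = (β/(2π))^{d/2} exp(−β|v|²/2) be the Maxwellian density on ℝ^d. Let ω ∈ ℂ with Re ω > 0 and let φ : ℝ^d → ℝ be measurable with ∫_{ℝ^d} |k| φ(k)² dk < ∞. For v₀ ∈ ℝ^d define the complex d×d matrix A(v₀) with entries A_{ab}(v₀) = ∫_{ℝ^d} k_a k_b φ(k)² ( ∫_{ℝ^d} M(v₁) / (ω + i k·(v₁ − v₀)) dv₁ ) dk; the inner integral converges absolutely since Re ω > 0, and the outer integral converges absolutely since the inner integral has modulus at most e^{β/2}/|k|. Then for every compactly supported smooth g : ℝ^d → ℂ, the quadratic form is nonnegative: Re ∫_{ℝ^d} Σ_{a,b=1}^d conj(∂_a g(v₀)) · A_{ab}(v₀) · ∂_b g(v₀) dv₀ ≥ 0. -/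

import Mathlib

open MeasureTheory
open scoped ENNReal RealInnerProductSpace

/-- The Maxwellian density `M(v) = (β/(2π))^{d/2} exp(−β|v|²/2)` on `ℝ^d`. -/
noncomputable def maxwellian (d : ℕ) (β : ℝ) (v : EuclideanSpace ℝ (Fin d)) : ℝ :=
  (β / (2 * Real.pi)) ^ ((d : ℝ) / 2) * Real.exp (-β * ‖v‖ ^ 2 / 2)

/-- The matrix field `A(v₀)` with entries
`A_{ab}(v₀) = ∫ k_a k_b φ(k)² (∫ M(v₁)/(ω + i k·(v₁−v₀)) dv₁) dk`. -/
noncomputable def Amat (d : ℕ) (β : ℝ) (ω : ℂ) (φ : EuclideanSpace ℝ (Fin d) → ℝ)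
    (v₀ : EuclideanSpace ℝ (Fin d)) (a b : Fin d) : ℂ :=
  ∫ k : EuclideanSpace ℝ (Fin d),
    ((k a : ℝ) : ℂ) * ((k b : ℝ) : ℂ) * ((φ k : ℝ) : ℂ) ^ 2 *
      ∫ v₁, (maxwellian d β v₁ : ℂ) / (ω + Complex.I * ((⟪k, v₁ - v₀⟫ : ℝ) : ℂ))

/-!
Pointwise in `v₀`, the quadratic form of `A(v₀)` at `z` is the integral over `k` of
`φ(k)² |k·z|² J(k)`, where `J(k) = ∫ M(v₁) / (ω + i k·(v₁ − v₀)) dv₁` has nonnegative real part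
because `Re (ω + i s)⁻¹ ≥ 0`. Interchanging the sum over entries with the integral over `k`
requires each entry to be integrable, hence the decay `‖k‖ |J(k)| ≤ √(πβ/2)`: writing
`(ω + i s)⁻¹ = ∫₀^∞ e^{-(ω + i s) t} dt` turns `J(k)` into a time integral of the characteristic
function of `M` along `t k`, which is at most the Gaussian integral
`∫₀^∞ e^{-t² ‖k‖² / (2β)} dt`.
-/

section RealPart

lemma re_integral_nonneg {α : Type*} [MeasurableSpace α] {μ : Measure α} {f : α → ℂ}
    (hf : ∀ᵐ x ∂μ, 0 ≤ (f x).re) : 0 ≤ (∫ x, f x ∂μ).re := by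
  by_cases hfi : Integrable f μ
  · exact (integral_nonneg_of_ae hf).trans_eq (integral_re hfi)
  · rw [integral_undef hfi, Complex.zero_re]

lemma re_sum_conj_mul_integral_mul_nonneg {α ι : Type*} [MeasurableSpace α] [Fintype ι]
    {μ : Measure α} {B : α → ι → ι → ℂ}
    (hB : ∀ a b, Integrable (fun x => B x a b) μ) (z : ι → ℂ)
    (hpos : ∀ᵐ x ∂μ, 0 ≤ (∑ a, ∑ b, (starRingEnd ℂ) (z a) * B x a b * z b).re) :
    0 ≤ (∑ a, ∑ b, (starRingEnd ℂ) (z a) * (∫ x, B x a b ∂μ) * z b).re := by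
  have hterm (a b : ι) : Integrable (fun x => (starRingEnd ℂ) (z a) * B x a b * z b) μ :=
    ((hB a b).const_mul _).mul_const _
  have hswap : ∑ a, ∑ b, (starRingEnd ℂ) (z a) * (∫ x, B x a b ∂μ) * z b =
      ∫ x, ∑ a, ∑ b, (starRingEnd ℂ) (z a) * B x a b * z b ∂μ := by
    rw [integral_finsetSum _ fun a _ => integrable_finsetSum _ fun b _ => hterm a b]
    simp_rw [integral_finsetSum _ fun b _ => hterm _ b, integral_mul_const, integral_const_mul]
  rw [hswap]
  exact re_integral_nonneg hpos

lemma sum_conj_mul_rankOne_mul {ι : Type*} [Fintype ι] (x : ι → ℝ) (z : ι → ℂ) (c : ℂ) :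
    ∑ a, ∑ b, (starRingEnd ℂ) (z a) * ((x a : ℂ) * (x b : ℂ) * c) * z b =
      (Complex.normSq (∑ a, (x a : ℂ) * z a) : ℂ) * c := by
  simp_rw [Complex.normSq_eq_conj_mul_self, map_sum, Finset.sum_mul_sum, Finset.sum_mul, map_mul,
    Complex.conj_ofReal]
  exact Finset.sum_congr rfl fun a _ => Finset.sum_congr rfl fun b _ => by ring

end RealPart

section Laplace

variable {ω : ℂ}

lemma add_I_mul_ofReal_ne_zero (hω : ω.re ≠ 0) (s : ℝ) : ω + Complex.I * (s : ℂ) ≠ 0 := by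
  intro h
  exact hω (by simpa using congrArg Complex.re h)

lemma re_ofReal_div_add_I_mul_nonneg (hω : 0 ≤ ω.re) {m : ℝ} (hm : 0 ≤ m) (s : ℝ) :
    0 ≤ ((m : ℂ) / (ω + Complex.I * (s : ℂ))).re := by
  rw [div_eq_mul_inv, Complex.re_ofReal_mul, Complex.inv_re]
  have hre : (ω + Complex.I * (s : ℂ)).re = ω.re := by simp
  rw [hre]
  exact mul_nonneg hm (div_nonneg hω (Complex.normSq_nonneg _))

lemma inv_add_I_mul_eq_integral_cexp (hω : 0 < ω.re) (s : ℝ) :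
    (ω + Complex.I * (s : ℂ))⁻¹ =
      ∫ t : ℝ in Set.Ioi 0, Complex.exp (-(ω + Complex.I * (s : ℂ)) * t) := by
  rw [integral_exp_mul_complex_Ioi (by simpa using hω), Complex.ofReal_zero, mul_zero,
    Complex.exp_zero, neg_div_neg_eq, one_div]

variable {α : Type*} [MeasurableSpace α] {μ : Measure α} {f : α → ℂ} {θ : α → ℝ}

lemma integrable_mul_cexp_neg_add_I_mul_prod (hω : 0 < ω.re) (hf : Integrable f μ)
    (hθ : Measurable θ) :
    Integrable (fun p : α × ℝ => f p.1 * Complex.exp (-(ω + Complex.I * (θ p.1 : ℂ)) * p.2))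
      (μ.prod (volume.restrict (Set.Ioi 0))) := by
  have hdecay : Integrable (fun t : ℝ => Real.exp (-ω.re * t)) (volume.restrict (Set.Ioi 0)) :=
    integrableOn_exp_mul_Ioi (neg_lt_zero.mpr hω) 0
  refine (hf.norm.mul_prod hdecay).mono' ?_ (.of_forall fun p => ?_)
  · exact hf.aestronglyMeasurable.comp_fst.mul (Measurable.aestronglyMeasurable (by fun_prop))
  · rw [norm_mul, Complex.norm_exp]
    simp

lemma integral_div_add_I_mul_eq_laplace [SFinite μ] (hω : 0 < ω.re) (hf : Integrable f μ)
    (hθ : Measurable θ) :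
    ∫ x, f x / (ω + Complex.I * (θ x : ℂ)) ∂μ =
      ∫ t : ℝ in Set.Ioi 0,
        Complex.exp (-ω * t) * ∫ x, f x * Complex.exp (((-t * θ x : ℝ) : ℂ) * Complex.I) ∂μ := by
  simp_rw [div_eq_mul_inv, inv_add_I_mul_eq_integral_cexp hω, ← integral_const_mul]
  rw [integral_integral_swap (integrable_mul_cexp_neg_add_I_mul_prod hω hf hθ)]
  congr! 4 with t
  rw [mul_left_comm, ← Complex.exp_add]
  congr 2
  push_cast
  ring

end Laplace

section Maxwellian

variable {d : ℕ} {β : ℝ}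

lemma maxwellian_nonneg (hβ : 0 ≤ β) (v : EuclideanSpace ℝ (Fin d)) : 0 ≤ maxwellian d β v := by
  unfold maxwellian
  positivity

lemma continuous_maxwellian : Continuous (maxwellian d β) := by
  unfold maxwellian
  fun_prop

lemma ofReal_maxwellian_mul_cexp_inner (w v : EuclideanSpace ℝ (Fin d)) :
    (maxwellian d β v : ℂ) * Complex.exp ((⟪w, v⟫ : ℝ) * Complex.I) =
      (((β / (2 * Real.pi)) ^ ((d : ℝ) / 2) : ℝ) : ℂ) *
        Complex.exp (-((β / 2 : ℝ) : ℂ) * ‖v‖ ^ 2 + Complex.I * (⟪w, v⟫ : ℝ)) := by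
  rw [maxwellian, Complex.ofReal_mul, mul_assoc, Complex.ofReal_exp, ← Complex.exp_add]
  congr 2
  push_cast
  ring

lemma integrable_maxwellian (hβ : 0 < β) :
    Integrable (fun v => (maxwellian d β v : ℂ)) := by
  have hgauss := GaussianFourier.integrable_cexp_neg_mul_sq_norm_add
    (V := EuclideanSpace ℝ (Fin d)) (b := ((β / 2 : ℝ) : ℂ)) (by simpa using hβ) Complex.I 0
  refine (hgauss.const_mul (((β / (2 * Real.pi)) ^ ((d : ℝ) / 2) : ℝ) : ℂ)).congr
    (.of_forall fun v => ?_)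
  simpa using (ofReal_maxwellian_mul_cexp_inner 0 v).symm

lemma maxwellian_prefactor_mul_gaussian_mass (hβ : 0 < β) :
    (((β / (2 * Real.pi)) ^ ((d : ℝ) / 2) : ℝ) : ℂ) *
      ((Real.pi : ℂ) / ((β / 2 : ℝ) : ℂ)) ^ ((d : ℂ) / 2) = 1 := by
  have hcpow : ((Real.pi : ℂ) / ((β / 2 : ℝ) : ℂ)) ^ ((d : ℂ) / 2) =
      (((Real.pi / (β / 2)) ^ ((d : ℝ) / 2) : ℝ) : ℂ) := by
    rw [Complex.ofReal_cpow (by positivity)]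
    push_cast
    rfl
  have hbase : β / (2 * Real.pi) * (Real.pi / (β / 2)) = 1 := by field_simp
  rw [hcpow, ← Complex.ofReal_mul, ← Real.mul_rpow (by positivity) (by positivity), hbase,
    Real.one_rpow, Complex.ofReal_one]

lemma integral_maxwellian_mul_cexp_inner (hβ : 0 < β) (w : EuclideanSpace ℝ (Fin d)) :
    ∫ v, (maxwellian d β v : ℂ) * Complex.exp ((⟪w, v⟫ : ℝ) * Complex.I) =
      (Real.exp (-‖w‖ ^ 2 / (2 * β)) : ℂ) := by
  simp_rw [ofReal_maxwellian_mul_cexp_inner]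
  rw [integral_const_mul,
    GaussianFourier.integral_cexp_neg_mul_sq_norm_add (by simpa using hβ), ← mul_assoc,
    finrank_euclideanSpace_fin, maxwellian_prefactor_mul_gaussian_mass hβ, one_mul, Complex.I_sq,
    Complex.ofReal_exp]
  congr 1
  push_cast
  field_simp
  ring

lemma norm_integral_maxwellian_mul_cexp_inner_sub (hβ : 0 < β)
    (w v₀ : EuclideanSpace ℝ (Fin d)) :
    ‖∫ v, (maxwellian d β v : ℂ) * Complex.exp ((⟪w, v - v₀⟫ : ℝ) * Complex.I)‖ =
      Real.exp (-‖w‖ ^ 2 / (2 * β)) := by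
  have hshift (v : EuclideanSpace ℝ (Fin d)) :
      (maxwellian d β v : ℂ) * Complex.exp ((⟪w, v - v₀⟫ : ℝ) * Complex.I) =
        (maxwellian d β v : ℂ) * Complex.exp ((⟪w, v⟫ : ℝ) * Complex.I) *
          Complex.exp (((-⟪w, v₀⟫ : ℝ) : ℂ) * Complex.I) := by
    rw [mul_assoc, ← Complex.exp_add, ← add_mul, ← Complex.ofReal_add, inner_sub_right,
      sub_eq_add_neg]
  simp_rw [hshift]
  rw [integral_mul_const, norm_mul, Complex.norm_exp_ofReal_mul_I, mul_one,
    integral_maxwellian_mul_cexp_inner hβ, Complex.norm_real, Real.norm_eq_abs, Real.abs_exp]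

lemma norm_cexp_mul_integral_maxwellian_le {ω : ℂ} {t : ℝ} (hβ : 0 < β) (hω : 0 ≤ ω.re)
    (ht : 0 ≤ t) (k v₀ : EuclideanSpace ℝ (Fin d)) :
    ‖Complex.exp (-ω * t) * ∫ v, (maxwellian d β v : ℂ) *
      Complex.exp (((-t * ⟪k, v - v₀⟫ : ℝ) : ℂ) * Complex.I)‖ ≤
        Real.exp (-(‖k‖ ^ 2 / (2 * β)) * t ^ 2) := by
  have hdamping : ‖Complex.exp (-ω * t)‖ ≤ 1 := by
    rw [Complex.norm_exp, Real.exp_le_one_iff, Complex.re_mul_ofReal, Complex.neg_re, neg_mul]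
    exact neg_nonpos.mpr (mul_nonneg hω ht)
  have hexponent : -‖(-t) • k‖ ^ 2 / (2 * β) = -(‖k‖ ^ 2 / (2 * β)) * t ^ 2 := by
    rw [norm_smul, mul_pow, Real.norm_eq_abs, sq_abs]
    ring
  simp_rw [← real_inner_smul_left]
  rw [norm_mul, norm_integral_maxwellian_mul_cexp_inner_sub hβ, hexponent]
  exact mul_le_of_le_one_left (Real.exp_nonneg _) hdamping

end Maxwellian

section ThermalResolvent

variable {d : ℕ} {β : ℝ} {ω : ℂ}

/-- The inner integral `J(k) = ∫ M(v₁) / (ω + i k·(v₁ − v₀)) dv₁` of `Amat`: the resolvent at `ω`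
of the phase `k·(v₁ − v₀)`, averaged over the thermal background velocity `v₁`. -/
noncomputable def thermalResolvent (d : ℕ) (β : ℝ) (ω : ℂ) (v₀ k : EuclideanSpace ℝ (Fin d)) : ℂ :=
  ∫ v₁, (maxwellian d β v₁ : ℂ) / (ω + Complex.I * ((⟪k, v₁ - v₀⟫ : ℝ) : ℂ))

lemma re_thermalResolvent_nonneg (hβ : 0 ≤ β) (hω : 0 ≤ ω.re)
    (v₀ k : EuclideanSpace ℝ (Fin d)) : 0 ≤ (thermalResolvent d β ω v₀ k).re :=
  re_integral_nonneg <| .of_forall fun v =>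
    re_ofReal_div_add_I_mul_nonneg hω (maxwellian_nonneg hβ v) _

lemma stronglyMeasurable_thermalResolvent (hω : ω.re ≠ 0) (v₀ : EuclideanSpace ℝ (Fin d)) :
    StronglyMeasurable (thermalResolvent d β ω v₀) := by
  have hkernel : Continuous fun p : EuclideanSpace ℝ (Fin d) × EuclideanSpace ℝ (Fin d) =>
      (maxwellian d β p.2 : ℂ) / (ω + Complex.I * ((⟪p.1, p.2 - v₀⟫ : ℝ) : ℂ)) :=
    (Complex.continuous_ofReal.comp (continuous_maxwellian.comp continuous_snd)).div
      (by fun_prop) fun _ => add_I_mul_ofReal_ne_zero hω _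
  exact hkernel.stronglyMeasurable.integral_prod_right

lemma norm_mul_norm_thermalResolvent_le (hβ : 0 < β) (hω : 0 < ω.re)
    (v₀ k : EuclideanSpace ℝ (Fin d)) :
    ‖k‖ * ‖thermalResolvent d β ω v₀ k‖ ≤ √(Real.pi * β / 2) := by
  obtain rfl | hk := eq_or_ne k 0
  · rw [norm_zero, zero_mul]
    exact Real.sqrt_nonneg _
  have htime : ‖thermalResolvent d β ω v₀ k‖ ≤ √(Real.pi / (‖k‖ ^ 2 / (2 * β))) / 2 := by
    rw [thermalResolvent,
      integral_div_add_I_mul_eq_laplace hω (integrable_maxwellian hβ) (by fun_prop),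
      ← integral_gaussian_Ioi]
    exact norm_integral_le_of_norm_le (integrable_exp_neg_mul_sq (by positivity)).integrableOn
      (ae_restrict_of_forall_mem measurableSet_Ioi fun t ht =>
        norm_cexp_mul_integral_maxwellian_le hβ hω.le (Set.mem_Ioi.mp ht).le k v₀)
  have hsquare : Real.pi / (‖k‖ ^ 2 / (2 * β)) = Real.pi * β / 2 * (2 / ‖k‖) ^ 2 := by
    field_simp
  calc
    ‖k‖ * ‖thermalResolvent d β ω v₀ k‖ ≤ ‖k‖ * (√(Real.pi / (‖k‖ ^ 2 / (2 * β))) / 2) := by gcongr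
    _ = ‖k‖ * (√(Real.pi * β / 2) * (2 / ‖k‖) / 2) := by
      rw [hsquare, Real.sqrt_mul' _ (sq_nonneg _), Real.sqrt_sq (by positivity)]
    _ = √(Real.pi * β / 2) := by field_simp

lemma integrable_mul_thermalResolvent (hβ : 0 < β) (hω : 0 < ω.re)
    {φ : EuclideanSpace ℝ (Fin d) → ℝ}
    (hint : Integrable fun k : EuclideanSpace ℝ (Fin d) => ‖k‖ * φ k ^ 2)
    (v₀ : EuclideanSpace ℝ (Fin d)) (a b : Fin d) :
    Integrable fun k : EuclideanSpace ℝ (Fin d) =>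
      (k a : ℂ) * (k b : ℂ) * ((φ k : ℂ) ^ 2 * thermalResolvent d β ω v₀ k) := by
  -- The integrand is `‖k‖ φ(k)²` times this bounded factor, also at `k = 0`, where `0 / 0 = 0`.
  have hmeas : AEStronglyMeasurable fun k : EuclideanSpace ℝ (Fin d) =>
      (k a : ℂ) * (k b : ℂ) / (‖k‖ : ℂ) * thermalResolvent d β ω v₀ k :=
    (Measurable.aestronglyMeasurable (by fun_prop)).mul
      (stronglyMeasurable_thermalResolvent hω.ne' v₀).aestronglyMeasurable
  have hbound (k : EuclideanSpace ℝ (Fin d)) :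
      ‖(k a : ℂ) * (k b : ℂ) / (‖k‖ : ℂ) * thermalResolvent d β ω v₀ k‖ ≤
        √(Real.pi * β / 2) := by
    have hcoord : ‖(k a : ℂ) * (k b : ℂ) / (‖k‖ : ℂ)‖ ≤ ‖k‖ := by
      rw [norm_div, norm_mul, Complex.norm_real, Complex.norm_real, Complex.norm_real, norm_norm]
      exact div_le_of_le_mul₀ (norm_nonneg _) (norm_nonneg _)
        (mul_le_mul (PiLp.norm_apply_le k a) (PiLp.norm_apply_le k b) (norm_nonneg _)
          (norm_nonneg _))
    rw [norm_mul]
    exact (mul_le_mul_of_nonneg_right hcoord (norm_nonneg _)).trans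
      (norm_mul_norm_thermalResolvent_le hβ hω v₀ k)
  refine (hint.ofReal.mul_bdd hmeas (.of_forall hbound)).congr (.of_forall fun k => ?_)
  obtain rfl | hk := eq_or_ne k 0
  · simp
  have hk_norm : (‖k‖ : ℂ) ≠ 0 := Complex.ofReal_ne_zero.mpr (norm_ne_zero_iff.mpr hk)
  simp only [RCLike.ofReal_mul, RCLike.ofReal_pow, Complex.coe_algebraMap]
  field_simp

end ThermalResolvent

lemma Amat_eq_integral (d : ℕ) (β : ℝ) (ω : ℂ) (φ : EuclideanSpace ℝ (Fin d) → ℝ)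
    (v₀ : EuclideanSpace ℝ (Fin d)) (a b : Fin d) :
    Amat d β ω φ v₀ a b = ∫ k : EuclideanSpace ℝ (Fin d),
      (k a : ℂ) * (k b : ℂ) * ((φ k : ℂ) ^ 2 * thermalResolvent d β ω v₀ k) := by
  simp_rw [Amat, ← mul_assoc, thermalResolvent]

theorem stmt8_general (d : ℕ) (β : ℝ) (hβ : 0 < β) (ω : ℂ) (hω : 0 < ω.re)
    (φ : EuclideanSpace ℝ (Fin d) → ℝ)
    (hint : Integrable (fun k : EuclideanSpace ℝ (Fin d) => ‖k‖ * (φ k) ^ 2))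
    (v₀ : EuclideanSpace ℝ (Fin d)) (z : Fin d → ℂ) :
    0 ≤ (∑ a : Fin d, ∑ b : Fin d,
        (starRingEnd ℂ) (z a) * Amat d β ω φ v₀ a b * z b).re := by
  simp_rw [Amat_eq_integral]
  refine re_sum_conj_mul_integral_mul_nonneg
    (integrable_mul_thermalResolvent hβ hω hint v₀) z (.of_forall fun k => ?_)
  rw [sum_conj_mul_rankOne_mul, ← mul_assoc, ← Complex.ofReal_pow, ← Complex.ofReal_mul,
    Complex.re_ofReal_mul]
  exact mul_nonneg (mul_nonneg (Complex.normSq_nonneg _) (sq_nonneg _))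
    (re_thermalResolvent_nonneg hβ.le hω.le v₀ k)

/-- Nonnegativity of the quadratic form of the 'hat operator' coefficient field:
`Re ∫ Σ_{a,b} conj(∂_a g) A_{ab} ∂_b g ≥ 0`. -/
theorem stmt8 (d : ℕ) (hd : 1 ≤ d) (β : ℝ) (hβ : 0 < β) (ω : ℂ) (hω : 0 < ω.re)
    (φ : EuclideanSpace ℝ (Fin d) → ℝ) (hφ : Measurable φ)
    (hint : Integrable (fun k : EuclideanSpace ℝ (Fin d) => ‖k‖ * (φ k) ^ 2))
    (g : EuclideanSpace ℝ (Fin d) → ℂ)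
    (hg : ContDiff ℝ (⊤ : ℕ∞) g) (hgs : HasCompactSupport g) :
    0 ≤ (∫ v₀, ∑ a : Fin d, ∑ b : Fin d,
        (starRingEnd ℂ) (fderiv ℝ g v₀ (EuclideanSpace.single a 1)) *
          Amat d β ω φ v₀ a b *
          fderiv ℝ g v₀ (EuclideanSpace.single b 1)).re :=
  re_integral_nonneg <| .of_forall fun v₀ => stmt8_general d β hβ ω hω φ hint v₀ _
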